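/- arXiv:2202.05614 — 9 statements merged into one kernel-verified Lean document; each statement's English description precedes it below -/
import Mathlib

section
/- Let H and K be real Hilbert spaces, let F, G : H → K be bounded linear operators and let λ > 0. Then sup over h ∈ H with ‖h‖ ≤ 1 of inf over q ∈ H of ( ‖F h − G q‖² + λ‖q‖² ) equals λ · ‖(G G* + λ I)^{-1/2} ∘ F‖²_op. (This is the closed-form expression for the dissimilarity D_λ at the operator level.) -/
open ContinuousLinearMap

theorem aux_inf
    {H K : Type*} [NormedAddCommGroup H] [InnerProductSpace ℝ H] [CompleteSpace H]
    [NormedAddCommGroup K] [InnerProductSpace ℝ K] [CompleteSpace K]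
    (G : H →L[ℝ] K) (l : ℝ) (hl : 0 < l)
    (J S : K →L[ℝ] K)
    (hJ : (G ∘L adjoint G + l • (1 : K →L[ℝ] K)) ∘L J = 1)
    (hS : S.IsPositive) (hSsq : S ∘L S = J) (k : K) :
    (⨅ q : H, (‖k - G q‖ ^ 2 + l * ‖q‖ ^ 2)) = l * ‖S k‖ ^ 2 := by
  obtain ⟨z, hz⟩ : ∃ z, z = J k := ⟨_, rfl⟩
  have hk : G (adjoint G z) + l • z = k := by
    have := DFunLike.congr_fun hJ k
    simpa [hz] using this
  have hSz : ‖S k‖ ^ 2 = l * ‖z‖ ^ 2 + ‖adjoint G z‖ ^ 2 := by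
    have h1 : inner ℝ (S k) (S k) = inner ℝ z k := by
      rw [hz, ← hSsq, ContinuousLinearMap.comp_apply]
      exact (hS.isSymmetric (S k) k).symm
    have h2 : inner ℝ z (G (adjoint G z)) = ‖adjoint G z‖ ^ 2 := by
      rw [← adjoint_inner_left, real_inner_self_eq_norm_sq]
    rw [← real_inner_self_eq_norm_sq, h1, ← hk, inner_add_right, h2, inner_smul_right,
      real_inner_self_eq_norm_sq, add_comm]
  have key : ∀ p : H, ‖k - G (adjoint G z + p)‖ ^ 2 + l * ‖adjoint G z + p‖ ^ 2
      = l * ‖S k‖ ^ 2 + ‖G p‖ ^ 2 + l * ‖p‖ ^ 2 := by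
    intro p
    have e : k - G (adjoint G z + p) = l • z - G p := by
      rw [map_add]
      nth_rewrite 1 [← hk]
      abel
    rw [e, norm_sub_sq_real, norm_add_sq_real, adjoint_inner_left, inner_smul_left, norm_smul,
      hSz, Real.norm_of_nonneg hl.le]
    simp only [conj_trivial]
    ring
  apply le_antisymm
  · have hb : BddBelow (Set.range fun q : H => ‖k - G q‖ ^ 2 + l * ‖q‖ ^ 2) :=
      ⟨0, by rintro _ ⟨q, rfl⟩; positivity⟩
    refine (ciInf_le hb (adjoint G z + 0)).trans (le_of_eq ?_)
    rw [key 0]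
    simp
  · refine le_ciInf fun q => ?_
    have := key (q - adjoint G z)
    rw [add_sub_cancel] at this
    rw [this]
    have : 0 ≤ l * ‖q - adjoint G z‖ ^ 2 := by positivity
    nlinarith [sq_nonneg ‖G (q - adjoint G z)‖]

/-- Closed-form expression for the dissimilarity `D_λ` at the operator level:
`sup_{‖h‖ ≤ 1} inf_q (‖F h − G q‖² + λ‖q‖²) = λ ‖(G G* + λ I)^{-1/2} ∘ F‖²`.
Here `J` is the inverse of `G G* + λ I` and `S` is its positive square root,
so that `S = (G G* + λ I)^{-1/2}`. -/
theorem stmt0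
    {H K : Type*} [NormedAddCommGroup H] [InnerProductSpace ℝ H] [CompleteSpace H]
    [NormedAddCommGroup K] [InnerProductSpace ℝ K] [CompleteSpace K]
    (F G : H →L[ℝ] K) (l : ℝ) (hl : 0 < l)
    (J S : K →L[ℝ] K)
    (hJ : (G ∘L adjoint G + l • (1 : K →L[ℝ] K)) ∘L J = 1)
    (hJ' : J ∘L (G ∘L adjoint G + l • (1 : K →L[ℝ] K)) = 1)
    (hS : S.IsPositive) (hSsq : S ∘L S = J) :
    (⨆ h : {h : H // ‖h‖ ≤ 1}, ⨅ q : H, (‖F h.1 - G q‖ ^ 2 + l * ‖q‖ ^ 2))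
      = l * ‖S ∘L F‖ ^ 2 := by
  have e : ∀ h : {h : H // ‖h‖ ≤ 1}, (⨅ q : H, (‖F h.1 - G q‖ ^ 2 + l * ‖q‖ ^ 2))
      = l * ‖(S ∘L F) h.1‖ ^ 2 := fun h => aux_inf G l hl J S hJ hS hSsq (F h.1)
  simp_rw [e]
  have hub : ∀ h : {h : H // ‖h‖ ≤ 1}, l * ‖(S ∘L F) h.1‖ ^ 2 ≤ l * ‖S ∘L F‖ ^ 2 := by
    intro h
    have := (S ∘L F).unit_le_opNorm h.1 h.2
    gcongr
  have hb : BddAbove (Set.range fun h : {h : H // ‖h‖ ≤ 1} => l * ‖(S ∘L F) h.1‖ ^ 2) :=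
    ⟨_, by rintro _ ⟨h, rfl⟩; exact hub h⟩
  haveI : Nonempty {h : H // ‖h‖ ≤ 1} := ⟨⟨0, by simp⟩⟩
  apply le_antisymm (ciSup_le hub)
  obtain ⟨M, hM⟩ : ∃ M, M = ⨆ h : {h : H // ‖h‖ ≤ 1}, l * ‖(S ∘L F) h.1‖ ^ 2 := ⟨_, rfl⟩
  have hle : ∀ h : H, ‖h‖ ≤ 1 → l * ‖(S ∘L F) h‖ ^ 2 ≤ M := fun h hh => by
    rw [hM]; exact le_ciSup hb ⟨h, hh⟩
  rw [← hM]
  have hM0 : 0 ≤ M := by simpa using hle 0 (by simp)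
  have hn : ‖S ∘L F‖ ≤ Real.sqrt (M / l) := by
    refine ContinuousLinearMap.opNorm_le_of_unit_norm (Real.sqrt_nonneg _) fun x hx => ?_
    apply Real.le_sqrt_of_sq_le
    rw [le_div_iff₀ hl, mul_comm]
    exact hle x hx.le
  have h2 : ‖S ∘L F‖ ^ 2 ≤ M / l := by
    rw [← Real.sq_sqrt (div_nonneg hM0 hl.le)]
    gcongr
  rw [le_div_iff₀ hl] at h2
  linarith
end

section
/- Let H and K be real Hilbert spaces, G : H → K a bounded linear operator, v ∈ K and λ > 0. Then the infimum over q ∈ H of ‖v − G q‖² + λ‖q‖² equals λ ⟨v, (G G* + λ I)^{-1} v⟩. -/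
open ContinuousLinearMap
open scoped RealInnerProductSpace

/-- `inf_q ‖v − G q‖² + λ‖q‖² = λ ⟨v, (G G* + λ I)^{-1} v⟩`.
Here `J` is the inverse of `G G* + λ I`. -/
theorem stmt2
    {H K : Type*} [NormedAddCommGroup H] [InnerProductSpace ℝ H] [CompleteSpace H]
    [NormedAddCommGroup K] [InnerProductSpace ℝ K] [CompleteSpace K]
    (G : H →L[ℝ] K) (v : K) (l : ℝ) (hl : 0 < l)
    (J : K →L[ℝ] K)
    (hJ : (G ∘L adjoint G + l • (1 : K →L[ℝ] K)) ∘L J = 1)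
    (hJ' : J ∘L (G ∘L adjoint G + l • (1 : K →L[ℝ] K)) = 1) :
    (⨅ q : H, (‖v - G q‖ ^ 2 + l * ‖q‖ ^ 2)) = l * ⟪v, J v⟫ := by
  set w := J v with hw
  set p := adjoint G w with hp
  have hv : v = G p + l • w := by
    have := congrArg (fun T : K →L[ℝ] K => T v) hJ
    simpa using this.symm
  have hadj : ∀ d : H, ⟪w, G d⟫ = ⟪p, d⟫ := fun d =>
    (adjoint_inner_left G d w).symm
  have hval : l * ⟪v, w⟫ = l * ‖p‖ ^ 2 + l ^ 2 * ‖w‖ ^ 2 := by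
    have h1 : ⟪v, w⟫ = ‖p‖ ^ 2 + l * ‖w‖ ^ 2 := by
      rw [hv, inner_add_left, real_inner_smul_left, real_inner_comm, hadj,
        real_inner_self_eq_norm_sq, real_inner_self_eq_norm_sq]
    rw [h1]; ring
  have key : ∀ q : H, ‖v - G q‖ ^ 2 + l * ‖q‖ ^ 2
      = l * ⟪v, w⟫ + ‖G (q - p)‖ ^ 2 + l * ‖q - p‖ ^ 2 := by
    intro q
    have e1 : v - G q = l • w - G (q - p) := by
      rw [map_sub]; nth_rewrite 1 [hv]; abel
    have e2 : ‖q‖ ^ 2 = ‖p‖ ^ 2 + 2 * ⟪p, q - p⟫ + ‖q - p‖ ^ 2 := by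
      rw [← norm_add_sq_real]; congr 2; abel
    rw [e1, e2, norm_sub_sq_real, real_inner_smul_left, hadj, hval, norm_smul, mul_pow,
      Real.norm_eq_abs, sq_abs]
    ring
  have hleast : IsLeast (Set.range fun q : H => ‖v - G q‖ ^ 2 + l * ‖q‖ ^ 2)
      (l * ⟪v, w⟫) := by
    refine ⟨⟨p, by simp only [key]; simp⟩, ?_⟩
    rintro _ ⟨q, rfl⟩
    simp only [key]
    have : 0 ≤ ‖G (q - p)‖ ^ 2 := by positivity
    have : 0 ≤ l * ‖q - p‖ ^ 2 := by positivity
    linarith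
  exact hleast.csInf_eq
end

section
/- Let H and K be real Hilbert spaces, F, G : H → K and R : H → H bounded linear operators such that F = G ∘ R, and let λ > 0. Then λ ‖(G G* + λ I)^{-1/2} ∘ F‖²_op ≤ λ ‖R‖²_op. (This is the operator-level mechanism behind the diffeomorphism-invariance bound D_λ(f, f∘Q) ≤ λ C_μ² C_Q².) -/
open ContinuousLinearMap

/-- If `F = G ∘ R` then `λ ‖(G G* + λ I)^{-1/2} ∘ F‖² ≤ λ ‖R‖²`.
Here `J` is the inverse of `G G* + λ I` and `S` its positive square root,
so that `S = (G G* + λ I)^{-1/2}`. -/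
theorem stmt8
    {H K : Type*} [NormedAddCommGroup H] [InnerProductSpace ℝ H] [CompleteSpace H]
    [NormedAddCommGroup K] [InnerProductSpace ℝ K] [CompleteSpace K]
    (F G : H →L[ℝ] K) (R : H →L[ℝ] H) (hFGR : F = G ∘L R) (l : ℝ) (hl : 0 < l)
    (J S : K →L[ℝ] K)
    (hJ : (G ∘L adjoint G + l • (1 : K →L[ℝ] K)) ∘L J = 1)
    (hJ' : J ∘L (G ∘L adjoint G + l • (1 : K →L[ℝ] K)) = 1)
    (hS : S.IsPositive) (hSsq : S ∘L S = J) :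
    l * ‖S ∘L F‖ ^ 2 ≤ l * ‖R‖ ^ 2 := by
  have key : ∀ h : H, ‖S (G h)‖ ≤ ‖h‖ := by
    intro h
    have e1 : G (adjoint G (J (G h))) + l • J (G h) = G h := by
      have := congrArg (fun T : K →L[ℝ] K => T (G h)) hJ
      simpa using this
    have e2 : S (S (G h)) = J (G h) := by rw [← hSsq]; rfl
    have e3 : ‖S (G h)‖ ^ 2 = inner ℝ (G h) (J (G h)) := by
      rw [← e2, ← real_inner_self_eq_norm_sq]
      exact hS.isSymmetric (G h) (S (G h))
    have e4 : (inner ℝ (G h) (J (G h)) : ℝ) = inner ℝ h (adjoint G (J (G h))) :=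
      (adjoint_inner_right G h (J (G h))).symm
    have e5 : (inner ℝ (G h) (J (G h)) : ℝ)
        = ‖adjoint G (J (G h))‖ ^ 2 + l * ‖J (G h)‖ ^ 2 := by
      have e8 : (inner ℝ (G h) (J (G h)) : ℝ)
          = inner ℝ (G (adjoint G (J (G h))) + l • J (G h)) (J (G h)) := by rw [e1]
      rw [e8, inner_add_left, real_inner_smul_left, ← adjoint_inner_right,
        real_inner_self_eq_norm_sq, real_inner_self_eq_norm_sq]
    have e6 := real_inner_le_norm h (adjoint G (J (G h)))
    have e7 : 0 ≤ l * ‖J (G h)‖ ^ 2 := by positivity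
    refine (sq_le_sq₀ (norm_nonneg _) (norm_nonneg _)).mp ?_
    nlinarith [sq_nonneg (‖h‖ - ‖adjoint G (J (G h))‖)]
  have hb : ‖S ∘L F‖ ≤ ‖R‖ := by
    refine opNorm_le_bound _ (norm_nonneg _) fun x => ?_
    rw [hFGR]
    exact (key (R x)).trans (R.le_opNorm x)
  gcongr
end

section
/- Let K and E be real Hilbert spaces, U : K → E a bounded linear operator with U U* = I_E (a co-isometry), B : E → E a positive bounded operator and λ > 0. Then U* B U + λ I_K is invertible and U (U* B U + λ I_K)^{-1} U* = (B + λ I_E)^{-1}. -/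
open ContinuousLinearMap

theorem isUnit_add_pos {H : Type*} [NormedAddCommGroup H] [InnerProductSpace ℝ H] [CompleteSpace H]
    (T : H →L[ℝ] H) (hT : T.IsPositive) (l : ℝ) (hl : 0 < l) :
    IsUnit (T + l • (1 : H →L[ℝ] H)) := by
  refine isUnit_of_forall_le_norm_inner_map _ (c := ⟨l, hl.le⟩) hl fun x => ?_
  have h := hT.inner_nonneg_left x
  have e : inner ℝ ((T + l • (1 : H →L[ℝ] H)) x) x = inner ℝ (T x) x + ‖x‖ ^ 2 * l := by
    simp [inner_add_left, real_inner_smul_left, mul_comm]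
  rw [e]
  refine le_trans ?_ (le_abs_self _)
  change ‖x‖ ^ 2 * l ≤ _
  linarith

/-- For a co-isometry `U : K → E` (i.e. `U U* = I`), a positive operator `B` on `E`
and `λ > 0`, the operator `U* B U + λ I` is invertible and
`U (U* B U + λ I)^{-1} U* = (B + λ I)^{-1}`. -/
theorem stmt10
    {K E : Type*} [NormedAddCommGroup K] [InnerProductSpace ℝ K] [CompleteSpace K]
    [NormedAddCommGroup E] [InnerProductSpace ℝ E] [CompleteSpace E]
    (U : K →L[ℝ] E) (hU : U ∘L adjoint U = 1)
    (B : E →L[ℝ] E) (hB : B.IsPositive) (l : ℝ) (hl : 0 < l) :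
    IsUnit (adjoint U ∘L B ∘L U + l • (1 : K →L[ℝ] K)) ∧
      U ∘L Ring.inverse (adjoint U ∘L B ∘L U + l • (1 : K →L[ℝ] K)) ∘L adjoint U
        = Ring.inverse (B + l • (1 : E →L[ℝ] E)) := by
  have hA := isUnit_add_pos _ (hB.adjoint_conj U) l hl
  have hC := isUnit_add_pos B hB l hl
  refine ⟨hA, ?_⟩
  set A := adjoint U ∘L B ∘L U + l • (1 : K →L[ℝ] K) with hAd
  set C := B + l • (1 : E →L[ℝ] E) with hCd
  have hU' : ∀ x, U (adjoint U x) = x := fun x => DFunLike.congr_fun hU x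
  have h1 : ∀ x, A (adjoint U x) = adjoint U (C x) := fun x => by
    simp [hAd, hCd, hU']
  have h2 : ∀ x, Ring.inverse A (A x) = x := fun x =>
    DFunLike.congr_fun (Ring.inverse_mul_cancel A hA) x
  have h3 : ∀ x, C (Ring.inverse C x) = x := fun x =>
    DFunLike.congr_fun (Ring.mul_inverse_cancel C hC) x
  ext x
  have h4 := h1 (Ring.inverse C x)
  rw [h3] at h4
  change U (Ring.inverse A (adjoint U x)) = Ring.inverse C x
  rw [← h4, h2, hU']
end

section
/- Let H, K, E, E' be real Hilbert spaces, F, G : H → K bounded linear operators, V : H → E with V V* = I_E, U : K → E' with U U* = I_{E'}, and λ > 0. Set P_X = V*V (an orthogonal projection on H), P_Y = U*U (an orthogonal projection on K), Â = U ∘ F ∘ V* and B̂ = U ∘ G ∘ V*. Then λ ‖(P_Y G P_X G* P_Y + λ I)^{-1/2} ∘ (P_Y ∘ F ∘ P_X)‖²_op = λ ‖Â* ∘ (B̂ B̂* + λ I)^{-1} ∘ Â‖_op. -/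
open ContinuousLinearMap

/-- Finite-dimensional characterization of the Nyström estimator: with `P_X = V*V`,
`P_Y = U*U`, `Â = U F V*` and `B̂ = U G V*`, one has
`λ ‖(P_Y G P_X G* P_Y + λ I)^{-1/2} (P_Y F P_X)‖² = λ ‖Â* (B̂ B̂* + λ I)^{-1} Â‖`.
Here `JM` is the inverse of `P_Y G P_X G* P_Y + λ I` and `S` its positive square root,
while `JB` is the inverse of `B̂ B̂* + λ I`. -/
theorem stmt12
    {H K E E' : Type*}
    [NormedAddCommGroup H] [InnerProductSpace ℝ H] [CompleteSpace H]
    [NormedAddCommGroup K] [InnerProductSpace ℝ K] [CompleteSpace K]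
    [NormedAddCommGroup E] [InnerProductSpace ℝ E] [CompleteSpace E]
    [NormedAddCommGroup E'] [InnerProductSpace ℝ E'] [CompleteSpace E']
    (F G : H →L[ℝ] K)
    (V : H →L[ℝ] E) (hV : V ∘L adjoint V = 1)
    (U : K →L[ℝ] E') (hU : U ∘L adjoint U = 1)
    (l : ℝ) (hl : 0 < l)
    (PX : H →L[ℝ] H) (hPX : PX = adjoint V ∘L V)
    (PY : K →L[ℝ] K) (hPY : PY = adjoint U ∘L U)
    (Ahat : E →L[ℝ] E') (hAhat : Ahat = U ∘L F ∘L adjoint V)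
    (Bhat : E →L[ℝ] E') (hBhat : Bhat = U ∘L G ∘L adjoint V)
    (JM S : K →L[ℝ] K)
    (hJM : (PY ∘L G ∘L PX ∘L adjoint G ∘L PY + l • (1 : K →L[ℝ] K)) ∘L JM = 1)
    (hJM' : JM ∘L (PY ∘L G ∘L PX ∘L adjoint G ∘L PY + l • (1 : K →L[ℝ] K)) = 1)
    (hS : S.IsPositive) (hSsq : S ∘L S = JM)
    (JB : E' →L[ℝ] E')
    (hJB : (Bhat ∘L adjoint Bhat + l • (1 : E' →L[ℝ] E')) ∘L JB = 1)
    (hJB' : JB ∘L (Bhat ∘L adjoint Bhat + l • (1 : E' →L[ℝ] E')) = 1) :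
    l * ‖S ∘L (PY ∘L F ∘L PX)‖ ^ 2 = l * ‖adjoint Ahat ∘L JB ∘L Ahat‖ := by
  have hUU : ∀ x, U (adjoint U x) = x := fun x => by
    simpa using congrArg (fun T : E' →L[ℝ] E' => T x) hU
  have hVV : ∀ x, V (adjoint V x) = x := fun x => by
    simpa using congrArg (fun T : E →L[ℝ] E => T x) hV
  have hBadj : adjoint Bhat = V ∘L adjoint G ∘L adjoint U := by
    rw [hBhat]; simp [adjoint_comp, ContinuousLinearMap.comp_assoc]
  have hAadj : adjoint Ahat = V ∘L adjoint F ∘L adjoint U := by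
    rw [hAhat]; simp [adjoint_comp, ContinuousLinearMap.comp_assoc]
  have hint : (PY ∘L G ∘L PX ∘L adjoint G ∘L PY + l • (1 : K →L[ℝ] K)) ∘L adjoint U
      = adjoint U ∘L (Bhat ∘L adjoint Bhat + l • (1 : E' →L[ℝ] E')) := by
    ext x
    rw [hBadj, hBhat, hPX, hPY]
    simp [hUU]
  have hJ : JM ∘L adjoint U = adjoint U ∘L JB := by
    calc JM ∘L adjoint U
        = JM ∘L (adjoint U ∘L ((Bhat ∘L adjoint Bhat + l • (1 : E' →L[ℝ] E')) ∘L JB)) := by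
          rw [hJB]; rfl
      _ = JM ∘L ((adjoint U ∘L (Bhat ∘L adjoint Bhat + l • (1 : E' →L[ℝ] E'))) ∘L JB) := rfl
      _ = (JM ∘L (PY ∘L G ∘L PX ∘L adjoint G ∘L PY + l • (1 : K →L[ℝ] K)))
            ∘L (adjoint U ∘L JB) := by rw [← hint]; rfl
      _ = adjoint U ∘L JB := by rw [hJM']; rfl
  have hJx : ∀ x, S (S (adjoint U x)) = adjoint U (JB x) := fun x => by
    have := congrArg (fun T : E' →L[ℝ] K => T x) hJ
    rw [← hSsq] at this
    simpa using this
  have hSadj : adjoint S = S := hS.isSelfAdjoint.adjoint_eq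
  have hT : S ∘L (PY ∘L F ∘L PX) = S ∘L adjoint U ∘L Ahat ∘L V := by
    rw [hPX, hPY, hAhat]; rfl
  have hTT : adjoint (S ∘L (PY ∘L F ∘L PX)) ∘L (S ∘L (PY ∘L F ∘L PX))
      = adjoint V ∘L (adjoint Ahat ∘L JB ∘L Ahat) ∘L V := by
    rw [hT]
    ext x
    simp [adjoint_comp, hSadj, hJx, hUU]
  have hV1 : ‖V‖ ≤ 1 := by
    have h := norm_adjoint_comp_self (adjoint V)
    rw [adjoint_adjoint, hV, LinearIsometryEquiv.norm_map] at h
    have h1 : ‖(1 : E →L[ℝ] E)‖ ≤ 1 := ContinuousLinearMap.norm_id_le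
    nlinarith [norm_nonneg V]
  have hV2 : ‖adjoint V‖ ≤ 1 := by rwa [LinearIsometryEquiv.norm_map]
  congr 1
  rw [pow_two, ← norm_adjoint_comp_self, hTT]
  generalize adjoint Ahat ∘L JB ∘L Ahat = X
  apply le_antisymm
  · calc _ ≤ ‖adjoint V‖ * (‖X‖ * ‖V‖) :=
          (opNorm_comp_le _ _).trans (by gcongr; exact opNorm_comp_le _ _)
      _ ≤ 1 * (‖X‖ * 1) := by gcongr
      _ = ‖X‖ := by ring
  · have hX : X = V ∘L (adjoint V ∘L X ∘L V) ∘L adjoint V := by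
      ext x; simp [hVV]
    calc ‖X‖ = ‖V ∘L (adjoint V ∘L X ∘L V) ∘L adjoint V‖ := congrArg _ hX
      _ ≤ ‖V‖ * (‖adjoint V ∘L X ∘L V‖ * ‖adjoint V‖) :=
          (opNorm_comp_le _ _).trans (by gcongr; exact opNorm_comp_le _ _)
      _ ≤ 1 * (‖adjoint V ∘L X ∘L V‖ * 1) := by gcongr
      _ = _ := by ring
end

section
/- Let H and K be real Hilbert spaces, B, B̂ : H → K bounded linear operators, and Q, Q̂ : K → K invertible positive bounded operators. Then | ‖Q^{-1/2} B‖²_op − ‖Q̂^{-1/2} B̂‖²_op | ≤ ‖B‖²_op ‖Q̂^{-1}‖_op ‖Q^{-1}‖_op ‖Q − Q̂‖_op + ‖Q̂^{-1}‖_op ‖B B* − B̂ B̂*‖_op. -/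
open ContinuousLinearMap

/-- Perturbation bound:
`| ‖Q^{-1/2} B‖² − ‖Q̂^{-1/2} B̂‖² | ≤ ‖B‖² ‖Q̂^{-1}‖ ‖Q^{-1}‖ ‖Q − Q̂‖ + ‖Q̂^{-1}‖ ‖B B* − B̂ B̂*‖`.
Here `JQ`, `JQhat` are the inverses of the invertible positive operators `Q`, `Qhat`,
and `S`, `Shat` the positive square roots of these inverses. -/
theorem stmt13
    {H K : Type*} [NormedAddCommGroup H] [InnerProductSpace ℝ H] [CompleteSpace H]
    [NormedAddCommGroup K] [InnerProductSpace ℝ K] [CompleteSpace K]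
    (B Bhat : H →L[ℝ] K) (Q Qhat : K →L[ℝ] K)
    (hQ : Q.IsPositive) (hQhat : Qhat.IsPositive)
    (JQ JQhat S Shat : K →L[ℝ] K)
    (hJQ : Q ∘L JQ = 1) (hJQ' : JQ ∘L Q = 1)
    (hJQhat : Qhat ∘L JQhat = 1) (hJQhat' : JQhat ∘L Qhat = 1)
    (hS : S.IsPositive) (hSsq : S ∘L S = JQ)
    (hShat : Shat.IsPositive) (hShatsq : Shat ∘L Shat = JQhat) :
    |‖S ∘L B‖ ^ 2 - ‖Shat ∘L Bhat‖ ^ 2|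
      ≤ ‖B‖ ^ 2 * ‖JQhat‖ * ‖JQ‖ * ‖Q - Qhat‖
        + ‖JQhat‖ * ‖B ∘L adjoint B - Bhat ∘L adjoint Bhat‖ := by
  have sa : adjoint S = S := hS.isSelfAdjoint.adjoint_eq
  have sha : adjoint Shat = Shat := hShat.isSelfAdjoint.adjoint_eq
  have e1 : ‖S ∘L B‖ ^ 2 = ‖adjoint B ∘L JQ ∘L B‖ := by
    rw [sq, ← norm_adjoint_comp_self, adjoint_comp, sa, ← hSsq]
    rfl
  have e2 : ‖Shat ∘L B‖ ^ 2 = ‖adjoint B ∘L JQhat ∘L B‖ := by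
    rw [sq, ← norm_adjoint_comp_self, adjoint_comp, sha, ← hShatsq]
    rfl
  have e3 : ∀ A : H →L[ℝ] K,
      ‖Shat ∘L A‖ ^ 2 = ‖Shat ∘L (A ∘L adjoint A) ∘L Shat‖ := by
    intro A
    have h := norm_adjoint_comp_self (adjoint (Shat ∘L A))
    rw [adjoint_adjoint, LinearIsometryEquiv.norm_map, adjoint_comp, sha] at h
    rw [sq, ← h]
    rfl
  have e4 : ‖Shat‖ * ‖Shat‖ = ‖JQhat‖ := by
    rw [← norm_adjoint_comp_self, sha, hShatsq]
  have hd : JQ - JQhat = JQ ∘L (Qhat - Q) ∘L JQhat := by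
    rw [sub_comp, comp_sub, hJQhat, ← comp_assoc, hJQ']
    rfl
  have b0 : ‖JQ - JQhat‖ ≤ ‖JQ‖ * (‖Q - Qhat‖ * ‖JQhat‖) := by
    rw [hd, norm_sub_rev Q Qhat]
    refine (opNorm_comp_le _ _).trans ?_
    gcongr
    exact opNorm_comp_le _ _
  have b1 : |‖S ∘L B‖ ^ 2 - ‖Shat ∘L B‖ ^ 2| ≤ ‖B‖ ^ 2 * ‖JQhat‖ * ‖JQ‖ * ‖Q - Qhat‖ := by
    rw [e1, e2]
    refine (abs_norm_sub_norm_le _ _).trans ?_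
    rw [← comp_sub, ← sub_comp]
    calc _ ≤ ‖adjoint B‖ * (‖JQ - JQhat‖ * ‖B‖) := by
          refine (opNorm_comp_le _ _).trans ?_
          gcongr
          exact opNorm_comp_le _ _
      _ ≤ ‖B‖ * ((‖JQ‖ * (‖Q - Qhat‖ * ‖JQhat‖)) * ‖B‖) := by
          rw [LinearIsometryEquiv.norm_map]
          gcongr
      _ = _ := by ring
  have b2 : |‖Shat ∘L B‖ ^ 2 - ‖Shat ∘L Bhat‖ ^ 2|
      ≤ ‖JQhat‖ * ‖B ∘L adjoint B - Bhat ∘L adjoint Bhat‖ := by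
    rw [e3, e3]
    refine (abs_norm_sub_norm_le _ _).trans ?_
    rw [← comp_sub, ← sub_comp]
    calc _ ≤ ‖Shat‖ * (‖B ∘L adjoint B - Bhat ∘L adjoint Bhat‖ * ‖Shat‖) := by
          refine (opNorm_comp_le _ _).trans ?_
          gcongr
          exact opNorm_comp_le _ _
      _ = _ := by rw [← e4]; ring
  exact (abs_sub_le _ (‖Shat ∘L B‖ ^ 2) _).trans (add_le_add b1 b2)
end

section
/- Let H and K be real Hilbert spaces, B : H → K a bounded linear operator, and Q, Q̂ : K → K invertible positive bounded operators. Then | ‖Q^{-1/2} B‖²_op − ‖Q̂^{-1/2} B‖²_op | ≤ ‖B‖²_op ‖Q̂^{-1}‖_op ‖Q − Q̂‖_op ‖Q^{-1}‖_op. -/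
open ContinuousLinearMap

/-- `| ‖Q^{-1/2} B‖² − ‖Q̂^{-1/2} B‖² | ≤ ‖B‖² ‖Q̂^{-1}‖ ‖Q − Q̂‖ ‖Q^{-1}‖`.
Here `JQ`, `JQhat` are the inverses of the invertible positive operators `Q`, `Qhat`,
and `S`, `Shat` the positive square roots of these inverses. -/
theorem stmt14
    {H K : Type*} [NormedAddCommGroup H] [InnerProductSpace ℝ H] [CompleteSpace H]
    [NormedAddCommGroup K] [InnerProductSpace ℝ K] [CompleteSpace K]
    (B : H →L[ℝ] K) (Q Qhat : K →L[ℝ] K)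
    (hQ : Q.IsPositive) (hQhat : Qhat.IsPositive)
    (JQ JQhat S Shat : K →L[ℝ] K)
    (hJQ : Q ∘L JQ = 1) (hJQ' : JQ ∘L Q = 1)
    (hJQhat : Qhat ∘L JQhat = 1) (hJQhat' : JQhat ∘L Qhat = 1)
    (hS : S.IsPositive) (hSsq : S ∘L S = JQ)
    (hShat : Shat.IsPositive) (hShatsq : Shat ∘L Shat = JQhat) :
    |‖S ∘L B‖ ^ 2 - ‖Shat ∘L B‖ ^ 2|
      ≤ ‖B‖ ^ 2 * ‖JQhat‖ * ‖Q - Qhat‖ * ‖JQ‖ := by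
  have key : ∀ (T J : K →L[ℝ] K), T.IsPositive → T ∘L T = J →
      ‖T ∘L B‖ ^ 2 = ‖adjoint B ∘L (J ∘L B)‖ := by
    intro T J hT hTJ
    rw [sq, ← norm_adjoint_comp_self, adjoint_comp, hT.isSelfAdjoint.adjoint_eq, ← hTJ]
    rfl
  have hd : JQ - JQhat = JQhat ∘L ((Qhat - Q) ∘L JQ) := by
    ext x
    have h1 : JQhat (Qhat (JQ x)) = JQ x := DFunLike.congr_fun hJQhat' (JQ x)
    have h2 : Q (JQ x) = x := DFunLike.congr_fun hJQ x
    simp [h1, h2]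
  rw [key S JQ hS hSsq, key Shat JQhat hShat hShatsq]
  have hsub : adjoint B ∘L (JQ ∘L B) - adjoint B ∘L (JQhat ∘L B)
      = adjoint B ∘L ((JQhat ∘L ((Qhat - Q) ∘L JQ)) ∘L B) := by
    rw [← hd]
    ext x
    simp
  calc _ ≤ ‖adjoint B ∘L (JQ ∘L B) - adjoint B ∘L (JQhat ∘L B)‖ := abs_norm_sub_norm_le _ _
    _ = ‖adjoint B ∘L ((JQhat ∘L ((Qhat - Q) ∘L JQ)) ∘L B)‖ := by rw [hsub]
    _ ≤ ‖adjoint B‖ * ((‖JQhat‖ * (‖Qhat - Q‖ * ‖JQ‖)) * ‖B‖) := by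
        refine (opNorm_comp_le _ _).trans ?_
        gcongr
        refine (opNorm_comp_le _ _).trans ?_
        gcongr
        refine (opNorm_comp_le _ _).trans ?_
        gcongr
        exact opNorm_comp_le _ _
    _ = _ := by
        rw [LinearIsometryEquiv.norm_map, norm_sub_rev]
        ring
end

section
/- Let H and K be real Hilbert spaces, B, B̂ : H → K bounded linear operators, and Q̂ : K → K an invertible positive bounded operator. Then | ‖Q̂^{-1/2} B‖²_op − ‖Q̂^{-1/2} B̂‖²_op | ≤ ‖Q̂^{-1}‖_op ‖B B* − B̂ B̂*‖_op. -/
open ContinuousLinearMap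

/-- `| ‖Q̂^{-1/2} B‖² − ‖Q̂^{-1/2} B̂‖² | ≤ ‖Q̂^{-1}‖ ‖B B* − B̂ B̂*‖`.
Here `JQhat` is the inverse of the invertible positive operator `Qhat` and
`Shat` the positive square root of this inverse. -/
theorem stmt15
    {H K : Type*} [NormedAddCommGroup H] [InnerProductSpace ℝ H] [CompleteSpace H]
    [NormedAddCommGroup K] [InnerProductSpace ℝ K] [CompleteSpace K]
    (B Bhat : H →L[ℝ] K) (Qhat : K →L[ℝ] K)
    (hQhat : Qhat.IsPositive)
    (JQhat Shat : K →L[ℝ] K)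
    (hJQhat : Qhat ∘L JQhat = 1) (hJQhat' : JQhat ∘L Qhat = 1)
    (hShat : Shat.IsPositive) (hShatsq : Shat ∘L Shat = JQhat) :
    |‖Shat ∘L B‖ ^ 2 - ‖Shat ∘L Bhat‖ ^ 2|
      ≤ ‖JQhat‖ * ‖B ∘L adjoint B - Bhat ∘L adjoint Bhat‖ := by
  have hS : adjoint Shat = Shat := hShat.isSelfAdjoint.adjoint_eq
  have key : ∀ A : H →L[ℝ] K,
      ‖Shat ∘L A‖ ^ 2 = ‖Shat ∘L (A ∘L adjoint A) ∘L Shat‖ := by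
    intro A
    have h := norm_adjoint_comp_self (adjoint (Shat ∘L A))
    rw [adjoint_adjoint, LinearIsometryEquiv.norm_map, adjoint_comp, hS] at h
    rw [pow_two, ← h]
    rfl
  have hJ : ‖JQhat‖ = ‖Shat‖ * ‖Shat‖ := by
    have h := norm_adjoint_comp_self Shat
    rwa [hS, hShatsq] at h
  rw [key, key, hJ]
  refine (abs_norm_sub_norm_le _ _).trans ?_
  have e : Shat ∘L (B ∘L adjoint B) ∘L Shat - Shat ∘L (Bhat ∘L adjoint Bhat) ∘L Shat
      = Shat ∘L (B ∘L adjoint B - Bhat ∘L adjoint Bhat) ∘L Shat := by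
    ext x
    simp
  rw [e]
  set D := B ∘L adjoint B - Bhat ∘L adjoint Bhat
  calc ‖Shat ∘L D ∘L Shat‖ ≤ ‖Shat‖ * ‖D ∘L Shat‖ := opNorm_comp_le _ _
    _ ≤ ‖Shat‖ * (‖D‖ * ‖Shat‖) := by
        gcongr
        exact opNorm_comp_le _ _
    _ = ‖Shat‖ * ‖Shat‖ * ‖D‖ := by ring
end

section
/- Let H and K be real Hilbert spaces, F, F̂, G, Ĝ : H → K bounded linear operators with ‖F‖_op ≤ L, and λ > 0. Then | λ ‖(G G* + λ I)^{-1/2} F‖²_op − λ ‖(Ĝ Ĝ* + λ I)^{-1/2} F̂‖²_op | ≤ L² λ^{-1} ‖G G* − Ĝ Ĝ*‖_op + ‖F F* − F̂ F̂*‖_op. (This is the deterministic core of the approximation-error bound for the Nyström estimator of D_λ.) -/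
open ContinuousLinearMap

theorem aux_J {H K : Type*} [NormedAddCommGroup H] [InnerProductSpace ℝ H] [CompleteSpace H]
    [NormedAddCommGroup K] [InnerProductSpace ℝ K] [CompleteSpace K]
    (G : H →L[ℝ] K) (l : ℝ) (hl : 0 < l) (J : K →L[ℝ] K)
    (hJ : (G ∘L adjoint G + l • (1 : K →L[ℝ] K)) ∘L J = 1) : ‖J‖ ≤ l⁻¹ := by
  refine ContinuousLinearMap.opNorm_le_bound _ (by positivity) fun x => ?_
  have h1 : G (adjoint G (J x)) + l • J x = x := by
    have := congrArg (fun T : K →L[ℝ] K => T x) hJ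
    simpa using this
  have h2 : inner ℝ (G (adjoint G (J x))) (J x) = ‖adjoint G (J x)‖ ^ 2 := by
    rw [← ContinuousLinearMap.adjoint_inner_right, real_inner_self_eq_norm_sq]
  have h3 : inner ℝ x (J x) = ‖adjoint G (J x)‖ ^ 2 + l * ‖J x‖ ^ 2 := by
    rw [← h2, ← real_inner_self_eq_norm_sq (J x), ← real_inner_smul_left, ← inner_add_left, h1]
  have h4 := real_inner_le_norm x (J x)
  rw [inv_mul_eq_div, le_div_iff₀ hl]
  rcases (norm_nonneg (J x)).eq_or_lt with h | h
  · rw [← h]; simp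
  · have : (‖J x‖ * l) * ‖J x‖ ≤ ‖x‖ * ‖J x‖ := by nlinarith [sq_nonneg ‖adjoint G (J x)‖]
    exact le_of_mul_le_mul_right this h

theorem aux_sq {H K : Type*} [NormedAddCommGroup H] [InnerProductSpace ℝ H] [CompleteSpace H]
    [NormedAddCommGroup K] [InnerProductSpace ℝ K] [CompleteSpace K]
    (F : H →L[ℝ] K) (S : K →L[ℝ] K) (hS : S.IsPositive) :
    ‖S ∘L F‖ ^ 2 = ‖adjoint F ∘L (S ∘L S) ∘L F‖ ∧
    ‖S ∘L F‖ ^ 2 = ‖S ∘L (F ∘L adjoint F) ∘L S‖ := by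
  have ha : adjoint S = S := hS.isSelfAdjoint.adjoint_eq
  constructor
  · rw [sq, ← norm_adjoint_comp_self, adjoint_comp, ha]
    simp only [ContinuousLinearMap.comp_assoc]
  · have := norm_adjoint_comp_self (adjoint (S ∘L F))
    rw [adjoint_adjoint, LinearIsometryEquiv.norm_map, adjoint_comp, ha] at this
    rw [sq, ← this]
    simp only [ContinuousLinearMap.comp_assoc]

/-- Deterministic core of the approximation-error bound for the Nyström estimator of `D_λ`:
if `‖F‖ ≤ L` then
`| λ ‖(G G* + λ I)^{-1/2} F‖² − λ ‖(Ĝ Ĝ* + λ I)^{-1/2} F̂‖² |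
   ≤ L² λ^{-1} ‖G G* − Ĝ Ĝ*‖ + ‖F F* − F̂ F̂*‖`.
Here `JG` (resp. `JGhat`) is the inverse of `G G* + λ I` (resp. `Ĝ Ĝ* + λ I`) and
`S` (resp. `Shat`) its positive square root. -/
theorem stmt17
    {H K : Type*} [NormedAddCommGroup H] [InnerProductSpace ℝ H] [CompleteSpace H]
    [NormedAddCommGroup K] [InnerProductSpace ℝ K] [CompleteSpace K]
    (F Fhat G Ghat : H →L[ℝ] K) (L : ℝ) (hF : ‖F‖ ≤ L) (l : ℝ) (hl : 0 < l)
    (JG JGhat S Shat : K →L[ℝ] K)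
    (hJG : (G ∘L adjoint G + l • (1 : K →L[ℝ] K)) ∘L JG = 1)
    (hJG' : JG ∘L (G ∘L adjoint G + l • (1 : K →L[ℝ] K)) = 1)
    (hJGhat : (Ghat ∘L adjoint Ghat + l • (1 : K →L[ℝ] K)) ∘L JGhat = 1)
    (hJGhat' : JGhat ∘L (Ghat ∘L adjoint Ghat + l • (1 : K →L[ℝ] K)) = 1)
    (hS : S.IsPositive) (hSsq : S ∘L S = JG)
    (hShat : Shat.IsPositive) (hShatsq : Shat ∘L Shat = JGhat) :
    |l * ‖S ∘L F‖ ^ 2 - l * ‖Shat ∘L Fhat‖ ^ 2|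
      ≤ L ^ 2 * l⁻¹ * ‖G ∘L adjoint G - Ghat ∘L adjoint Ghat‖
        + ‖F ∘L adjoint F - Fhat ∘L adjoint Fhat‖ := by
  have nJ := aux_J G l hl JG hJG
  have nJh := aux_J Ghat l hl JGhat hJGhat
  have nS : ‖Shat‖ * ‖Shat‖ ≤ l⁻¹ := by
    rw [← norm_adjoint_comp_self, hShat.isSelfAdjoint.adjoint_eq, hShatsq]; exact nJh
  have hL : 0 ≤ L := (norm_nonneg _).trans hF
  set D := ‖G ∘L adjoint G - Ghat ∘L adjoint Ghat‖ with hD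
  set E := ‖F ∘L adjoint F - Fhat ∘L adjoint Fhat‖ with hE
  have hD0 : 0 ≤ D := norm_nonneg _
  have hE0 : 0 ≤ E := norm_nonneg _
  have res : JG - JGhat = -(JG ∘L (G ∘L adjoint G - Ghat ∘L adjoint Ghat) ∘L JGhat) := by
    have e : G ∘L adjoint G - Ghat ∘L adjoint Ghat =
      (G ∘L adjoint G + l • (1 : K →L[ℝ] K)) - (Ghat ∘L adjoint Ghat + l • (1 : K →L[ℝ] K)) := by
      abel
    rw [e, ContinuousLinearMap.sub_comp, ContinuousLinearMap.comp_sub, hJGhat,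
      ← ContinuousLinearMap.comp_assoc, hJG']
    ext x
    simp
  have nres : ‖JG - JGhat‖ ≤ l⁻¹ * (D * l⁻¹) := by
    rw [res, norm_neg]
    refine (opNorm_comp_le _ _).trans ?_
    refine mul_le_mul nJ ((opNorm_comp_le _ _).trans ?_) (norm_nonneg _) (by positivity)
    exact mul_le_mul_of_nonneg_left nJh hD0
  have b1 : |‖S ∘L F‖ ^ 2 - ‖Shat ∘L F‖ ^ 2| ≤ L * (l⁻¹ * (D * l⁻¹) * L) := by
    rw [(aux_sq F S hS).1, (aux_sq F Shat hShat).1, hSsq, hShatsq]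
    refine (abs_norm_sub_norm_le _ _).trans ?_
    rw [← ContinuousLinearMap.comp_sub, ← ContinuousLinearMap.sub_comp]
    refine (opNorm_comp_le _ _).trans ?_
    rw [LinearIsometryEquiv.norm_map]
    refine mul_le_mul hF ((opNorm_comp_le _ _).trans ?_) (norm_nonneg _) hL
    exact mul_le_mul nres hF (norm_nonneg _) (by positivity)
  have b2 : |‖Shat ∘L F‖ ^ 2 - ‖Shat ∘L Fhat‖ ^ 2| ≤ l⁻¹ * E := by
    rw [(aux_sq F Shat hShat).2, (aux_sq Fhat Shat hShat).2]
    refine (abs_norm_sub_norm_le _ _).trans ?_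
    rw [← ContinuousLinearMap.comp_sub, ← ContinuousLinearMap.sub_comp]
    refine (opNorm_comp_le _ _).trans ?_
    calc _ ≤ ‖Shat‖ * (E * ‖Shat‖) :=
          mul_le_mul_of_nonneg_left (opNorm_comp_le _ _) (norm_nonneg _)
      _ = (‖Shat‖ * ‖Shat‖) * E := by ring
      _ ≤ _ := mul_le_mul_of_nonneg_right nS hE0
  have b3 := abs_sub_le (‖S ∘L F‖ ^ 2) (‖Shat ∘L F‖ ^ 2) (‖Shat ∘L Fhat‖ ^ 2)
  rw [← mul_sub, abs_mul, abs_of_pos hl]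
  calc _ ≤ l * (L * (l⁻¹ * (D * l⁻¹) * L) + l⁻¹ * E) :=
        mul_le_mul_of_nonneg_left (by linarith) hl.le
    _ = _ := by field_simp
end
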